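/- arXiv:1908.03541 — 2 statements merged into one kernel-verified Lean document; each statement's English description precedes it below -/
import Mathlib

section
/- Let (ξ_i)_{i≥1} be real-valued random variables on a probability space with uniformly bounded expectations |Eξ_i| < M for all i, where M is a constant. For each n let J_n be a subset of {1,…,n} with |J_n| = k(n) and 0 ≤ k(n) < n, and suppose k(n)/n → 0 as n → ∞. If (1/n)·∑_{i=1}^n ξ_i − (1/n)·∑_{i=1}^n Eξ_i converges in probability to 0, and moreover for every sequence of index sets the centered averages (1/(n−k(n)))·∑_{i∈{1,…,n}\J_n} ξ_i − (1/(n−k(n)))·∑_{i∈{1,…,n}\J_n} Eξ_i converge in probability to 0, then (1/n)·∑_{i∈{1,…,n}\J_n} ξ_i − (1/n)·∑_{i=1}^n Eξ_i converges in probability to 0 as n → ∞. -/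
open MeasureTheory ProbabilityTheory Filter Topology

/-!
Normalizing the centered sum of the retained items by `n` instead of by their number only shrinks
it, so it still tends to zero in probability. What is left is the average of the deleted
expectations, a deterministic quantity of absolute value at most `M * (k n / n)`.
-/

theorem tendstoInMeasure_zero_of_norm_le_add {α ι E F : Type*} [MeasurableSpace α]
    [SeminormedAddCommGroup E] [SeminormedAddCommGroup F]
    {μ : Measure α} {l : Filter ι} {f : ι → α → E} {g : ι → α → F} {a : ι → ℝ}
    (hg : TendstoInMeasure μ g l (fun _ => 0)) (ha : Tendsto a l (𝓝 0))
    (hfg : ∀ᶠ n in l, ∀ᵐ x ∂μ, ‖f n x‖ ≤ ‖g n x‖ + a n) :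
    TendstoInMeasure μ f l (fun _ => 0) := by
  simp only [tendstoInMeasure_iff_norm, sub_zero] at hg ⊢
  intro ε hε
  have hmeasure : ∀ᶠ n in l, μ {x | ε ≤ ‖f n x‖} ≤ μ {x | ε / 2 ≤ ‖g n x‖} := by
    filter_upwards [hfg, ha.eventually_lt_const (half_pos hε)] with n hfgn han
    refine measure_mono_ae ?_
    filter_upwards [hfgn] with x hx (hεx : ε ≤ ‖f n x‖)
    change ε / 2 ≤ ‖g n x‖
    linarith
  exact tendsto_of_tendsto_of_tendsto_of_le_of_le' tendsto_const_nhds (hg (ε / 2) (half_pos hε))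
    (Eventually.of_forall fun _ => zero_le) hmeasure

section DeletedAverage

variable {ι E : Type*} [SeminormedAddCommGroup E] [NormedSpace ℝ E] {S T J : Finset ι}

theorem norm_inv_card_smul_sum_le_of_subset (hTS : T ⊆ S) (x : ι → E) :
    ‖(S.card : ℝ)⁻¹ • ∑ i ∈ T, x i‖ ≤ ‖(T.card : ℝ)⁻¹ • ∑ i ∈ T, x i‖ := by
  obtain rfl | hT := T.eq_empty_or_nonempty
  · simp
  have hT_pos : (0 : ℝ) < T.card := by exact_mod_cast hT.card_pos
  rw [norm_smul, norm_smul, norm_inv, norm_inv, RCLike.norm_natCast, RCLike.norm_natCast]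
  have hcard : (T.card : ℝ) ≤ S.card := by exact_mod_cast Finset.card_le_card hTS
  exact mul_le_mul_of_nonneg_right (inv_anti₀ hT_pos hcard) (norm_nonneg _)

theorem norm_inv_smul_sum_le_mul_card_div {m : ι → E} {M : ℝ} (hm : ∀ i ∈ J, ‖m i‖ ≤ M) (n : ℕ) :
    ‖(n : ℝ)⁻¹ • ∑ i ∈ J, m i‖ ≤ M * (J.card / n) :=
  calc ‖(n : ℝ)⁻¹ • ∑ i ∈ J, m i‖ = (n : ℝ)⁻¹ * ‖∑ i ∈ J, m i‖ := by
        rw [norm_smul, norm_inv, RCLike.norm_natCast]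
    _ ≤ (n : ℝ)⁻¹ * ∑ _i ∈ J, M := by gcongr; exact norm_sum_le_of_le J hm
    _ = M * (J.card / n) := by rw [Finset.sum_const, nsmul_eq_mul]; ring

theorem norm_deleted_average_sub_le [DecidableEq ι] (hJS : J ⊆ S) (x : ι → E) {m : ι → E} {M : ℝ}
    (hm : ∀ i ∈ J, ‖m i‖ ≤ M) :
    ‖(S.card : ℝ)⁻¹ • (∑ i ∈ S \ J, x i - ∑ i ∈ S, m i)‖ ≤
      ‖((S \ J).card : ℝ)⁻¹ • ∑ i ∈ S \ J, (x i - m i)‖ + M * (J.card / S.card) :=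
  calc ‖(S.card : ℝ)⁻¹ • (∑ i ∈ S \ J, x i - ∑ i ∈ S, m i)‖
      = ‖(S.card : ℝ)⁻¹ • ∑ i ∈ S \ J, (x i - m i) - (S.card : ℝ)⁻¹ • ∑ i ∈ J, m i‖ := by
        rw [← smul_sub, Finset.sum_sub_distrib, sub_sub, Finset.sum_sdiff hJS]
    _ ≤ ‖(S.card : ℝ)⁻¹ • ∑ i ∈ S \ J, (x i - m i)‖ + ‖(S.card : ℝ)⁻¹ • ∑ i ∈ J, m i‖ :=
        norm_sub_le _ _
    _ ≤ ‖((S \ J).card : ℝ)⁻¹ • ∑ i ∈ S \ J, (x i - m i)‖ + M * (J.card / S.card) :=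
        add_le_add (norm_inv_card_smul_sum_le_of_subset Finset.sdiff_subset _)
          (norm_inv_smul_sum_le_mul_card_div hm _)

end DeletedAverage

theorem uniform_deleting_items_WLLN_general {Ω E : Type*} [MeasurableSpace Ω] {μ : Measure Ω}
    [SeminormedAddCommGroup E] [NormedSpace ℝ E]
    (ξ : ℕ → Ω → E) {m : ℕ → E} {M : ℝ} (hm : ∀ i, ‖m i‖ ≤ M)
    {J : ℕ → Finset ℕ} (hJ : ∀ n, J n ⊆ Finset.Icc 1 n)
    (hJlim : Tendsto (fun n : ℕ => ((J n).card : ℝ) / n) atTop (𝓝 0))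
    (hretained : TendstoInMeasure μ
      (fun n ω => ((Finset.Icc 1 n \ J n).card : ℝ)⁻¹ •
        ∑ i ∈ Finset.Icc 1 n \ J n, (ξ i ω - m i))
      atTop (fun _ => 0)) :
    TendstoInMeasure μ
      (fun (n : ℕ) ω => (n : ℝ)⁻¹ •
        (∑ i ∈ Finset.Icc 1 n \ J n, ξ i ω - ∑ i ∈ Finset.Icc 1 n, m i))
      atTop (fun _ => 0) := by
  have herror : Tendsto (fun n : ℕ => M * ((J n).card / n)) atTop (𝓝 0) := by
    simpa only [mul_zero] using hJlim.const_mul M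
  refine tendstoInMeasure_zero_of_norm_le_add hretained herror
    (.of_forall fun n => .of_forall fun ω => ?_)
  simpa only [Nat.card_Icc, Nat.add_sub_cancel] using
    norm_deleted_average_sub_le (hJ n) (fun i => ξ i ω) fun i _ => hm i

/-- Uniform deleting-items WLLN (transfer of a WLLN to deleting-items sums). -/
theorem uniform_deleting_items_WLLN
    {Ω : Type*} [MeasureSpace Ω] [IsProbabilityMeasure (ℙ : Measure Ω)]
    (ξ : ℕ → Ω → ℝ) (hmeas : ∀ i, Measurable (ξ i))
    (M : ℝ) (hmean : ∀ i, |𝔼[ξ i]| < M)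
    (k : ℕ → ℕ) (J : ℕ → Finset ℕ)
    (hJ : ∀ n, J n ⊆ Finset.Icc 1 n)
    (hJcard : ∀ n, (J n).card = k n)
    (hk : ∀ n, 1 ≤ n → k n < n)
    (hklim : Tendsto (fun (n : ℕ) => (k n : ℝ) / n) atTop (𝓝 0))
    (hWLLN : TendstoInMeasure ℙ
      (fun (n : ℕ) (ω : Ω) => (1 / n : ℝ) * ∑ i ∈ Finset.Icc 1 n, ξ i ω
        - (1 / n : ℝ) * ∑ i ∈ Finset.Icc 1 n, 𝔼[ξ i])
      atTop (fun _ => (0 : ℝ)))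
    (hWLLNdel : ∀ K : ℕ → Finset ℕ, (∀ n, K n ⊆ Finset.Icc 1 n) →
      (∀ n, (K n).card = k n) →
      TendstoInMeasure ℙ
        (fun (n : ℕ) (ω : Ω) =>
          (1 / ((n - k n : ℕ) : ℝ)) * ∑ i ∈ Finset.Icc 1 n \ K n, ξ i ω
          - (1 / ((n - k n : ℕ) : ℝ)) * ∑ i ∈ Finset.Icc 1 n \ K n, 𝔼[ξ i])
        atTop (fun _ => (0 : ℝ))) :
    TendstoInMeasure ℙ
      (fun (n : ℕ) (ω : Ω) => (1 / n : ℝ) * ∑ i ∈ Finset.Icc 1 n \ J n, ξ i ω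
        - (1 / n : ℝ) * ∑ i ∈ Finset.Icc 1 n, 𝔼[ξ i])
      atTop (fun _ => (0 : ℝ)) := by
  simpa [mul_sub] using uniform_deleting_items_WLLN_general ξ (fun i => (hmean i).le) hJ
    (by simpa only [hJcard] using hklim)
    (by simpa [Finset.card_sdiff_of_subset (hJ _), hJcard, mul_sub] using hWLLNdel J hJ hJcard)
end

section
/- Let (ξ_i)_{i≥1} be pairwise independent identically distributed real-valued random variables on a probability space with E|ξ_i| < ∞ and Eξ_i = μ. For each n let J_n be a subset of {1,…,n} with |J_n| = k(n) and 0 ≤ k(n) < n, and suppose k(n)/n → 0 as n → ∞. Then (1/n)·∑_{i∈{1,…,n}\J_n} ξ_i → μ almost surely as n → ∞. -/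
open MeasureTheory ProbabilityTheory Filter Topology

/-! Deleting the indices in `J n` from the average over `{1, …, n}` changes it by
`n⁻¹ • ∑ i ∈ J n, ξ i`. Each term is at most `M + (‖ξ i‖ - M)⁺` in norm, so this change is at most
`M * #(J n) / n`, which tends to `0`, plus the average of the excesses `(‖ξ i‖ - M)⁺` over all of
`{1, …, n}`. By the strong law that average converges to the expected excess, which is small for
large `M` by dominated convergence. As the estimate over `{1, …, n}` does not mention `J`, a single
null set serves all choices of deleted indices, even those depending on `ω`. -/

section CesaroUniformIntegrable

variable {E : Type*} [SeminormedAddCommGroup E]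

/-- Cesàro uniform integrability: the sequence `x 1, x 2, …` is asymptotically uniformly integrable
with respect to the uniform probability measures on `{1, …, n}`. The tails are measured by the
excesses `(‖x i‖ - M)⁺`, which are continuous in `x i`, instead of `‖x i‖` restricted to
`{M < ‖x i‖}`; both versions agree since the latter with `2 * M` is at most twice the former. -/
def CesaroUniformIntegrable (x : ℕ → E) : Prop :=
  ∀ ε > 0, ∃ M : ℝ, ∀ᶠ n : ℕ in atTop, (∑ i ∈ Finset.Icc 1 n, (‖x i‖ - M)⁺) / n < ε

lemma norm_sum_le_card_mul_add_sum_posPart {ι : Type*} {s t : Finset ι} (hst : s ⊆ t)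
    (x : ι → E) (M : ℝ) :
    ‖∑ i ∈ s, x i‖ ≤ s.card * M + ∑ i ∈ t, (‖x i‖ - M)⁺ :=
  calc ‖∑ i ∈ s, x i‖
    _ ≤ ∑ i ∈ s, (M + (‖x i‖ - M)⁺) :=
        norm_sum_le_of_le s fun i _ => sub_le_iff_le_add'.1 (le_posPart (‖x i‖ - M))
    _ = s.card * M + ∑ i ∈ s, (‖x i‖ - M)⁺ := by
        rw [Finset.sum_add_distrib, Finset.sum_const, nsmul_eq_mul]
    _ ≤ s.card * M + ∑ i ∈ t, (‖x i‖ - M)⁺ := by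
        gcongr

lemma CesaroUniformIntegrable.tendsto_inv_smul_sum_zero [NormedSpace ℝ E] {x : ℕ → E}
    (hx : CesaroUniformIntegrable x) {J : ℕ → Finset ℕ} (hJ : ∀ n, J n ⊆ Finset.Icc 1 n)
    (hcard : Tendsto (fun n : ℕ => ((J n).card : ℝ) / n) atTop (𝓝 0)) :
    Tendsto (fun n : ℕ => (n : ℝ)⁻¹ • ∑ i ∈ J n, x i) atTop (𝓝 0) := by
  rw [NormedAddGroup.tendsto_nhds_zero]
  intro ε hε
  obtain ⟨M, hM⟩ := hx (ε / 2) (half_pos hε)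
  have hdensity : ∀ᶠ n : ℕ in atTop, (J n).card / n * M < ε / 2 := by
    refine (hcard.mul_const M).eventually_lt_const ?_
    rw [zero_mul]
    exact half_pos hε
  filter_upwards [hM, hdensity] with n hexcess hdensity
  calc ‖(n : ℝ)⁻¹ • ∑ i ∈ J n, x i‖
    _ = ‖∑ i ∈ J n, x i‖ / n := by
        rw [norm_smul, norm_inv, Real.norm_natCast, inv_mul_eq_div]
    _ ≤ ((J n).card * M + ∑ i ∈ Finset.Icc 1 n, (‖x i‖ - M)⁺) / n := by
        gcongr
        exact norm_sum_le_card_mul_add_sum_posPart (hJ n) x M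
    _ = (J n).card / n * M + (∑ i ∈ Finset.Icc 1 n, (‖x i‖ - M)⁺) / n := by ring
    _ < ε := by linarith

end CesaroUniformIntegrable

section Excess

lemma norm_posPart_sub_le {a b : ℝ} (ha : 0 ≤ a) (hb : 0 ≤ b) : ‖(a - b)⁺‖ ≤ a := by
  rw [Real.norm_of_nonneg (posPart_nonneg _), posPart_def]
  exact sup_le (sub_le_self a hb) ha

variable {Ω E : Type*} [MeasurableSpace Ω] {P : Measure Ω} [NormedAddCommGroup E] {X : Ω → E}

lemma aestronglyMeasurable_posPart_norm_sub (hX : AEStronglyMeasurable X P) (M : ℝ) :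
    AEStronglyMeasurable (fun ω => (‖X ω‖ - M)⁺) P :=
  (by fun_prop : Continuous fun x : E => (‖x‖ - M)⁺).comp_aestronglyMeasurable hX

lemma integrable_posPart_norm_sub (hX : Integrable X P) {M : ℝ} (hM : 0 ≤ M) :
    Integrable (fun ω => (‖X ω‖ - M)⁺) P :=
  hX.mono (aestronglyMeasurable_posPart_norm_sub hX.aestronglyMeasurable M) <|
    .of_forall fun ω => norm_posPart_sub_le (norm_nonneg (X ω)) hM

lemma tendsto_integral_posPart_norm_sub (hX : Integrable X P) :
    Tendsto (fun M : ℝ => ∫ ω, (‖X ω‖ - M)⁺ ∂P) atTop (𝓝 0) := by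
  rw [← integral_zero Ω ℝ (μ := P)]
  refine tendsto_integral_filter_of_dominated_convergence (fun ω => ‖X ω‖)
    (.of_forall fun M => aestronglyMeasurable_posPart_norm_sub hX.aestronglyMeasurable M)
    ?_ hX.norm (.of_forall fun ω => ?_)
  · filter_upwards [eventually_ge_atTop 0] with M hM
    exact .of_forall fun ω => norm_posPart_sub_le (norm_nonneg (X ω)) hM
  · refine tendsto_const_nhds.congr' ?_
    filter_upwards [eventually_ge_atTop ‖X ω‖] with M hM
    exact (posPart_of_nonpos (sub_nonpos.2 hM)).symm

end Excess

section StrongLaw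

variable {Ω E : Type*} [MeasurableSpace Ω] {P : Measure Ω} [NormedAddCommGroup E]
  [MeasurableSpace E] {ξ : ℕ → Ω → E}

lemma strong_law_ae_Icc [NormedSpace ℝ E] [CompleteSpace E] [BorelSpace E]
    (hint : Integrable (ξ 1) P) (hindep : Pairwise fun i j => IndepFun (ξ i) (ξ j) P)
    (hident : ∀ i, IdentDistrib (ξ i) (ξ 1) P P) :
    ∀ᵐ ω ∂P, Tendsto (fun n : ℕ => (n : ℝ)⁻¹ • ∑ i ∈ Finset.Icc 1 n, ξ i ω) atTop
      (𝓝 (∫ ω, ξ 1 ω ∂P)) := by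
  have hshift := strong_law_ae (μ := P) (fun i => ξ (i + 1)) hint
    (hindep.comp_of_injective (add_left_injective 1)) (fun i => hident (i + 1))
  filter_upwards [hshift] with ω hω
  refine hω.congr fun n => ?_
  rw [Finset.range_eq_Ico, Finset.sum_Ico_add' (fun i => ξ i ω), zero_add,
    Finset.Ico_add_one_right_eq_Icc]

lemma ae_cesaroUniformIntegrable [OpensMeasurableSpace E]
    (hint : Integrable (ξ 1) P) (hindep : Pairwise fun i j => IndepFun (ξ i) (ξ j) P)
    (hident : ∀ i, IdentDistrib (ξ i) (ξ 1) P P) :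
    ∀ᵐ ω ∂P, CesaroUniformIntegrable fun i => ξ i ω := by
  have hmeas (M : ℝ) : Measurable fun x : E => (‖x‖ - M)⁺ :=
    (by fun_prop : Continuous fun x : E => (‖x‖ - M)⁺).measurable
  have hexcess : ∀ᵐ ω ∂P, ∀ M : ℕ,
      Tendsto (fun n : ℕ => (n : ℝ)⁻¹ • ∑ i ∈ Finset.Icc 1 n, (‖ξ i ω‖ - M)⁺) atTop
        (𝓝 (∫ ω, (‖ξ 1 ω‖ - M)⁺ ∂P)) :=
    ae_all_iff.2 fun M => strong_law_ae_Icc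
      (integrable_posPart_norm_sub hint M.cast_nonneg)
      (fun _ _ hij => (hindep hij).comp (hmeas M) (hmeas M))
      (fun i => (hident i).comp (hmeas M))
  have hmean := (tendsto_integral_posPart_norm_sub hint).comp tendsto_natCast_atTop_atTop
  filter_upwards [hexcess] with ω hω ε hε
  obtain ⟨M, hM⟩ := (hmean.eventually_lt_const hε).exists
  refine ⟨M, ?_⟩
  simpa only [smul_eq_mul, inv_mul_eq_div] using (hω M).eventually_lt_const hM

theorem deleting_items_SLLN_general [NormedSpace ℝ E] [CompleteSpace E] [BorelSpace E]
    (hint : Integrable (ξ 1) P) (hindep : Pairwise fun i j => IndepFun (ξ i) (ξ j) P)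
    (hident : ∀ i, IdentDistrib (ξ i) (ξ 1) P P) :
    ∀ᵐ ω ∂P, ∀ J : ℕ → Finset ℕ, (∀ n, J n ⊆ Finset.Icc 1 n) →
      Tendsto (fun n : ℕ => ((J n).card : ℝ) / n) atTop (𝓝 0) →
      Tendsto (fun n : ℕ => (n : ℝ)⁻¹ • ∑ i ∈ Finset.Icc 1 n \ J n, ξ i ω) atTop
        (𝓝 (∫ ω, ξ 1 ω ∂P)) := by
  filter_upwards [strong_law_ae_Icc hint hindep hident,
    ae_cesaroUniformIntegrable hint hindep hident] with ω hfull hui J hJ hcard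
  have hdiff := hfull.sub (hui.tendsto_inv_smul_sum_zero hJ hcard)
  rw [sub_zero] at hdiff
  refine hdiff.congr fun n => ?_
  rw [← smul_sub, Finset.sum_sdiff_eq_sub (hJ n)]

end StrongLaw

/-- Deleting-items strong law of large numbers. -/
theorem deleting_items_SLLN
    {Ω : Type*} [MeasureSpace Ω] [IsProbabilityMeasure (ℙ : Measure Ω)]
    (ξ : ℕ → Ω → ℝ) (hmeas : ∀ i, Measurable (ξ i))
    (hindep : Pairwise (fun i j => IndepFun (ξ i) (ξ j) ℙ))
    (hident : ∀ i j, IdentDistrib (ξ i) (ξ j) ℙ ℙ)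
    (μ : ℝ) (hint : ∀ i, Integrable (ξ i) ℙ) (hmean : ∀ i, 𝔼[ξ i] = μ)
    (k : ℕ → ℕ) (J : ℕ → Finset ℕ)
    (hJ : ∀ n, J n ⊆ Finset.Icc 1 n)
    (hJcard : ∀ n, (J n).card = k n)
    (hk : ∀ n, 1 ≤ n → k n < n)
    (hklim : Tendsto (fun (n : ℕ) => (k n : ℝ) / n) atTop (𝓝 0)) :
    ∀ᵐ ω ∂ℙ, Tendsto
      (fun (n : ℕ) => (1 / n : ℝ) * ∑ i ∈ Finset.Icc 1 n \ J n, ξ i ω)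
      atTop (𝓝 μ) := by
  filter_upwards [deleting_items_SLLN_general (hint 1) hindep (hident · 1)] with ω hω
  simpa only [one_div, smul_eq_mul, hmean] using hω J hJ (by simpa only [hJcard] using hklim)
end
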